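/- For every τ in the complex upper half-plane, β(2τ)·c(τ)² = 1 − 2c(τ)³; equivalently β(2τ) = 1/c(τ)² − 2c(τ). -/

import Mathlib

open Complex

/-- The nome `q = exp(2πiτ)`. -/
noncomputable def nome (τ : ℂ) : ℂ := Complex.exp (2 * Real.pi * I * τ)

/-- Ramanujan's cubic continued fraction, as an infinite product:
`c(τ) = q^{1/3} ∏_{n≥1} (1-q^{6n-1})(1-q^{6n-5})/(1-q^{6n-3})²`. -/
noncomputable def c (τ : ℂ) : ℂ :=
  Complex.exp (2 * Real.pi * I * τ / 3) *
    ∏' n : ℕ,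
      ((1 - nome τ ^ (6 * (n + 1) - 1)) * (1 - nome τ ^ (6 * (n + 1) - 5)) /
        (1 - nome τ ^ (6 * (n + 1) - 3)) ^ 2)

/-- The Dedekind eta function `η(τ) = e^{πiτ/12} ∏_{n≥1} (1 - e^{2πinτ})`. -/
noncomputable def dedekindEta (τ : ℂ) : ℂ :=
  Complex.exp (Real.pi * I * τ / 12) *
    ∏' n : ℕ, (1 - Complex.exp (2 * Real.pi * I * (n + 1) * τ))

/-- `α(τ) = 3 + 27 η(9τ)³/η(τ)³`. -/
noncomputable def alpha (τ : ℂ) : ℂ :=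
  3 + 27 * dedekindEta (9 * τ) ^ 3 / dedekindEta τ ^ 3

/-- `β(τ) = 3 + η(τ/3)³/η(3τ)³`. -/
noncomputable def beta (τ : ℂ) : ℂ :=
  3 + dedekindEta (τ / 3) ^ 3 / dedekindEta (3 * τ) ^ 3

/-!
Put `t = q ^ (1 / 3)`. In terms of `φ(q) = ∑ q ^ (n ^ 2)` and `ψ(q) = ∑ q ^ (n (n + 1) / 2)`,
`n` running over `ℤ` and `ℕ` respectively, splitting the sums according to `n` modulo `3` gives

* `φ(-t) = φ(-t ^ 9) (1 - 2 c)`,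
* `c ψ(t) = t ψ(t ^ 9) (1 + c)`,

once the theta quotients that occur are recognised as `c` by the Jacobi triple product. The same
product formula gives `ψ(t) ^ 2 φ(-t) = (t ^ 2; t ^ 2)_∞ ^ 3`, essentially `η(2τ / 3) ^ 3`. Dividing
this identity at `t` by the one at `t ^ 9` yields
`η(2τ / 3) ^ 3 / η(6τ) ^ 3 = (1 + c) ^ 2 (1 - 2 c) / c ^ 2`, and adding `3` to the right-hand side
leaves `(1 - 2 c ^ 3) / c ^ 2`.

To keep all exponents integral, the theta series are evaluated at powers of `t ^ (1 / 2)`.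
-/

open Filter Topology

section GaussianBinomial

/-- The Gaussian binomial coefficient `[n, k]_q`, the `q`-analogue of `Nat.choose` that counts
`k`-dimensional subspaces when `q` is the order of a finite field. It is defined by the `q`-Pascal
recursion so that it makes sense for every `q`, roots of unity included. -/
def gaussBinom {R : Type*} [CommSemiring R] (q : R) : ℕ → ℕ → R
  | _, 0 => 1
  | 0, _ + 1 => 0
  | n + 1, k + 1 => gaussBinom q n k + q ^ (k + 1) * gaussBinom q n (k + 1)

section CommSemiring

variable {R : Type*} [CommSemiring R]

lemma gaussBinom_zero_right (q : R) (n : ℕ) : gaussBinom q n 0 = 1 := by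
  cases n <;> rfl

lemma gaussBinom_succ_succ (q : R) (n k : ℕ) :
    gaussBinom q (n + 1) (k + 1) = gaussBinom q n k + q ^ (k + 1) * gaussBinom q n (k + 1) := rfl

lemma gaussBinom_eq_zero_of_lt (q : R) : ∀ {n k : ℕ}, n < k → gaussBinom q n k = 0
  | 0, _ + 1, _ => rfl
  | n + 1, k + 1, h => by
    rw [gaussBinom_succ_succ, gaussBinom_eq_zero_of_lt q (by lia : n < k),
      gaussBinom_eq_zero_of_lt q (by lia : n < k + 1), mul_zero, add_zero]

lemma gaussBinom_self (q : R) : ∀ n : ℕ, gaussBinom q n n = 1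
  | 0 => rfl
  | n + 1 => by
    rw [gaussBinom_succ_succ, gaussBinom_self q n, gaussBinom_eq_zero_of_lt q n.lt_succ_self,
      mul_zero, add_zero]

lemma sum_gaussBinom_succ_mul (q : R) (n : ℕ) (g : ℕ → R) :
    ∑ k ∈ Finset.range (n + 2), gaussBinom q (n + 1) k * g k =
      ∑ k ∈ Finset.range (n + 1), gaussBinom q n k * g (k + 1) +
        ∑ k ∈ Finset.range (n + 1), gaussBinom q n k * (q ^ k * g k) := by
  have extend : ∑ k ∈ Finset.range (n + 1), gaussBinom q n k * (q ^ k * g k) =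
      ∑ k ∈ Finset.range (n + 2), gaussBinom q n k * (q ^ k * g k) := by
    rw [Finset.sum_range_succ _ (n + 1), gaussBinom_eq_zero_of_lt q n.lt_succ_self, zero_mul,
      add_zero]
  rw [extend, Finset.sum_range_succ', Finset.sum_range_succ' _ (n + 1), ← add_assoc,
    ← Finset.sum_add_distrib]
  congr 1
  · refine Finset.sum_congr rfl fun k _ ↦ ?_
    rw [gaussBinom_succ_succ]
    ring
  · simp [gaussBinom_zero_right]

lemma prod_one_add_mul_pow_odd (q z : R) (m : ℕ) :
    ∏ i ∈ Finset.range m, (1 + z * q ^ (2 * i + 1)) =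
      ∑ k ∈ Finset.range (m + 1), gaussBinom (q ^ 2) m k * (q ^ k ^ 2 * z ^ k) := by
  induction m generalizing z with
  | zero => simp [gaussBinom]
  | succ m ih =>
    have peel : ∏ i ∈ Finset.range (m + 1), (1 + z * q ^ (2 * i + 1)) =
        (z * q + 1) * ∏ i ∈ Finset.range m, (1 + z * q ^ 2 * q ^ (2 * i + 1)) := by
      rw [Finset.prod_range_succ', mul_comm, mul_zero, zero_add, pow_one, add_comm]
      exact congrArg _ (Finset.prod_congr rfl fun i _ ↦ by ring)
    rw [peel, ih, sum_gaussBinom_succ_mul, add_mul, one_mul, Finset.mul_sum]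
    congr 1 <;> exact Finset.sum_congr rfl fun k _ ↦ by ring

/-- The finite form of the Jacobi triple product, multiplied through by `z ^ n` so that it holds
without inverting `z`. -/
lemma prod_mul_prod_eq_sum_gaussBinom (q z : R) (m n : ℕ) :
    (∏ i ∈ Finset.range m, (1 + z * q ^ (2 * i + 1))) *
        ∏ i ∈ Finset.range n, (z + q ^ (2 * i + 1)) =
      ∑ k ∈ Finset.range (m + n + 1),
        gaussBinom (q ^ 2) (m + n) k * (q ^ ((k : ℤ) - n).natAbs ^ 2 * z ^ k) := by
  induction n with
  | zero => simpa using prod_one_add_mul_pow_odd q z m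
  | succ n ih =>
    have exponent (k : ℕ) : ((k : ℤ) - n).natAbs ^ 2 + (2 * n + 1) =
        2 * k + ((k : ℤ) - (n + 1 : ℕ)).natAbs ^ 2 := by
      zify
      simp only [sq_abs]
      ring
    rw [Finset.prod_range_succ, ← mul_assoc, ih, ← add_assoc m, sum_gaussBinom_succ_mul, mul_add,
      Finset.sum_mul, Finset.sum_mul]
    congr 1 <;> refine Finset.sum_congr rfl fun k _ ↦ ?_
    · rw [show ((k + 1 : ℕ) : ℤ) - (n + 1 : ℕ) = k - n by push_cast; ring]
      ring
    · rw [← pow_mul, ← mul_assoc (q ^ (2 * k)), ← pow_add, ← exponent, pow_add]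
      ring

end CommSemiring

end GaussianBinomial

section QPochhammer

/-- The finite `q`-Pochhammer symbol `(x; q)_n = (1 - x)(1 - x q) ⋯ (1 - x q ^ (n - 1))`. -/
def qPoch {R : Type*} [CommRing R] (x q : R) (n : ℕ) : R := ∏ i ∈ Finset.range n, (1 - x * q ^ i)

/-- The infinite `q`-Pochhammer symbol `(x; q)_∞ = ∏ (1 - x q ^ n)`, the product being over
`n ≥ 0`; it is meaningful for `‖q‖ < 1`. -/
noncomputable def qPochInf {R : Type*} [CommRing R] [TopologicalSpace R] (x q : R) : R :=
  ∏' n : ℕ, (1 - x * q ^ n)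

lemma gaussBinom_mul_qPoch {R : Type*} [CommRing R] (q : R) : ∀ n k : ℕ,
    gaussBinom q (n + k) k * (qPoch q q k * qPoch q q n) = qPoch q q (n + k)
  | n, 0 => by simp [gaussBinom_zero_right, qPoch]
  | 0, k + 1 => by simp [gaussBinom_self, qPoch]
  | n + 1, k + 1 => by
    have qPoch_succ (m : ℕ) : qPoch q q (m + 1) = qPoch q q m * (1 - q ^ (m + 1)) := by
      rw [qPoch, Finset.prod_range_succ, pow_succ', qPoch]
    have left := gaussBinom_mul_qPoch q (n + 1) k
    have right := gaussBinom_mul_qPoch q n (k + 1)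
    rw [show n + (k + 1) = n + 1 + k by ring] at right
    rw [← add_assoc (n + 1), gaussBinom_succ_succ, qPoch_succ (n + 1 + k)]
    rw [qPoch_succ n] at left ⊢
    rw [qPoch_succ k] at right ⊢
    linear_combination (1 - q ^ (k + 1)) * left + q ^ (k + 1) * (1 - q ^ (n + 1)) * right
termination_by n k => n + k

variable {𝕜 : Type*} [NormedField 𝕜] {x q : 𝕜}

lemma norm_pow_lt_one (hq : ‖q‖ < 1) (n : ℕ) [NeZero n] : ‖q ^ n‖ < 1 := by
  rw [norm_pow]
  exact pow_lt_one₀ (norm_nonneg q) hq (NeZero.ne n)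

lemma one_sub_mul_pow_ne_zero (hx : ‖x‖ < 1) (hq : ‖q‖ < 1) (n : ℕ) : 1 - x * q ^ n ≠ 0 := by
  have h : ‖x * q ^ n‖ < 1 := by
    rw [norm_mul, norm_pow]
    exact mul_lt_one_of_nonneg_of_lt_one_left (norm_nonneg x) hx
      (pow_le_one₀ (norm_nonneg q) hq.le)
  intro h0
  rw [← sub_eq_zero.mp h0, norm_one] at h
  exact h.false

lemma qPoch_ne_zero (hx : ‖x‖ < 1) (hq : ‖q‖ < 1) (n : ℕ) : qPoch x q n ≠ 0 :=
  Finset.prod_ne_zero_iff.mpr fun i _ ↦ one_sub_mul_pow_ne_zero hx hq i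

lemma gaussBinom_eq_div (hq : ‖q‖ < 1) (n k : ℕ) :
    gaussBinom q (n + k) k = qPoch q q (n + k) / (qPoch q q k * qPoch q q n) :=
  eq_div_of_mul_eq (mul_ne_zero (qPoch_ne_zero hq hq k) (qPoch_ne_zero hq hq n))
    (gaussBinom_mul_qPoch q n k)

lemma summable_norm_neg_mul_pow (x : 𝕜) (hq : ‖q‖ < 1) :
    Summable fun n : ℕ ↦ ‖-(x * q ^ n)‖ := by
  simpa [norm_mul, norm_pow] using
    (summable_geometric_of_lt_one (norm_nonneg q) hq).mul_left ‖x‖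

variable [CompleteSpace 𝕜]

lemma multipliable_one_sub_mul_pow (x : 𝕜) (hq : ‖q‖ < 1) :
    Multipliable fun n : ℕ ↦ 1 - x * q ^ n := by
  simpa only [sub_eq_add_neg] using
    multipliable_one_add_of_summable (summable_norm_neg_mul_pow x hq)

lemma tendsto_qPoch (x : 𝕜) (hq : ‖q‖ < 1) : Tendsto (qPoch x q) atTop (𝓝 (qPochInf x q)) :=
  (multipliable_one_sub_mul_pow x hq).tendsto_prod_tprod_nat

lemma qPochInf_ne_zero (hx : ‖x‖ < 1) (hq : ‖q‖ < 1) : qPochInf x q ≠ 0 := by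
  simpa only [qPochInf, sub_eq_add_neg] using tprod_one_add_ne_zero_of_summable
    (fun n ↦ by simpa only [sub_eq_add_neg] using one_sub_mul_pow_ne_zero hx hq n)
    (summable_norm_neg_mul_pow x hq)

lemma qPochInf_eq_one_sub_mul (x : 𝕜) (hq : ‖q‖ < 1) :
    qPochInf x q = (1 - x) * qPochInf (x * q) q := by
  have shift (n : ℕ) : 1 - x * q ^ (n + 1) = 1 - x * q * q ^ n := by ring
  rw [qPochInf, tprod_eq_zero_mul']
  · simp only [shift, pow_zero, mul_one, qPochInf]
  · simpa only [shift] using multipliable_one_sub_mul_pow (x * q) hq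

lemma qPochInf_eq_prod_fin (x : 𝕜) (hq : ‖q‖ < 1) (m : ℕ) [NeZero m] :
    qPochInf x q = ∏ r : Fin m, qPochInf (x * q ^ (r : ℕ)) (q ^ m) := by
  let e : ℕ ≃ Fin m × ℕ := (Nat.divModEquiv m).trans (Equiv.prodComm ℕ (Fin m))
  have residue (r : Fin m) (n : ℕ) :
      1 - x * q ^ e.symm (r, n) = 1 - x * q ^ (r : ℕ) * (q ^ m) ^ n := by
    simp only [e, Equiv.symm_trans_apply, Equiv.prodComm_symm, Equiv.prodComm_apply,
      Prod.swap_prod_mk, Nat.divModEquiv_symm_apply]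
    ring
  have multipliable : Multipliable fun p ↦ 1 - x * q ^ e.symm p :=
    (e.symm.multipliable_iff (f := fun n ↦ 1 - x * q ^ n)).mpr (multipliable_one_sub_mul_pow x hq)
  rw [qPochInf, ← e.symm.tprod_eq, multipliable.tprod_prod' fun r ↦ ?_, tprod_fintype]
  · simp only [residue, qPochInf]
  · simpa only [residue] using
      multipliable_one_sub_mul_pow _ (norm_pow_lt_one hq m)

lemma qPochInf_mul_qPochInf_neg (x : 𝕜) (hq : ‖q‖ < 1) :
    qPochInf x q * qPochInf (-x) q = qPochInf (x ^ 2) (q ^ 2) := by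
  rw [qPochInf, qPochInf, qPochInf, ← (multipliable_one_sub_mul_pow x hq).tprod_mul
    (multipliable_one_sub_mul_pow (-x) hq)]
  exact tprod_congr fun n ↦ by ring

/-- Euler's identity: partitions into distinct parts are equinumerous with partitions into odd
parts. -/
lemma qPochInf_neg_mul_qPochInf_sq (hq : ‖q‖ < 1) :
    qPochInf (-q) q * qPochInf q (q ^ 2) = 1 := by
  have bisect : qPochInf q q = qPochInf q (q ^ 2) * qPochInf (q ^ 2) (q ^ 2) := by
    simpa [Fin.prod_univ_two, ← sq] using qPochInf_eq_prod_fin q hq 2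
  have hq2 : ‖q ^ 2‖ < 1 := norm_pow_lt_one hq 2
  apply mul_left_cancel₀ (qPochInf_ne_zero hq2 hq2)
  linear_combination qPochInf_mul_qPochInf_neg q hq - qPochInf (-q) q * bisect

/-- The factors of Euler's identity whose exponents are prime to `3`. -/
lemma qPochInf_neg_mul_qPochInf_cube (hq : ‖q‖ < 1) :
    qPochInf (-q) (q ^ 3) * qPochInf (-q ^ 2) (q ^ 3) *
      (qPochInf q (q ^ 6) * qPochInf (q ^ 5) (q ^ 6)) = 1 := by
  have trisect_neg : qPochInf (-q) q =
      qPochInf (-q) (q ^ 3) * qPochInf (-q ^ 2) (q ^ 3) * qPochInf (-q ^ 3) (q ^ 3) := by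
    simpa [Fin.prod_univ_three, ← pow_succ', ← pow_succ] using qPochInf_eq_prod_fin (-q) hq 3
  have trisect_odd : qPochInf q (q ^ 2) =
      qPochInf q (q ^ 6) * qPochInf (q ^ 3) (q ^ 6) * qPochInf (q ^ 5) (q ^ 6) := by
    simpa [Fin.prod_univ_three, ← pow_mul, ← pow_succ'] using
      qPochInf_eq_prod_fin q (norm_pow_lt_one hq 2) 3
  have euler := qPochInf_neg_mul_qPochInf_sq hq
  have euler_cube := qPochInf_neg_mul_qPochInf_sq (norm_pow_lt_one hq 3)
  rw [← pow_mul] at euler_cube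
  rw [trisect_neg, trisect_odd] at euler
  linear_combination euler - qPochInf (-q) (q ^ 3) * qPochInf (-q ^ 2) (q ^ 3) *
    (qPochInf q (q ^ 6) * qPochInf (q ^ 5) (q ^ 6)) * euler_cube

end QPochhammer

section JacobiTripleProduct

/-- The coefficient `[2N, N + k]_q` of `z ^ k` in the finite Jacobi triple product, extended by zero
to all integers `k`. -/
def centralGaussBinom {R : Type*} [CommSemiring R] (q : R) (N : ℕ) (k : ℤ) : R :=
  if -N ≤ k then gaussBinom q (2 * N) (k + N).toNat else 0

lemma tsum_centralGaussBinom_mul {R : Type*} [CommSemiring R] [TopologicalSpace R] (q : R) (N : ℕ)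
    (f : ℤ → R) :
    ∑' k : ℤ, centralGaussBinom q N k * f k =
      ∑ j ∈ Finset.range (2 * N + 1), gaussBinom q (2 * N) j * f (j - N) := by
  have shift_injective : Function.Injective fun j : ℕ ↦ (j : ℤ) - N := fun i j h ↦ by
    simpa using h
  have coeff (j : ℕ) : centralGaussBinom q N (j - N) = gaussBinom q (2 * N) j := by
    rw [centralGaussBinom, if_pos (by lia), sub_add_cancel, Int.toNat_natCast]
  rw [← shift_injective.tsum_eq, tsum_eq_sum (s := Finset.range (2 * N + 1))]
  · simp only [coeff]
  · intro j hj
    rw [coeff, gaussBinom_eq_zero_of_lt _ (by simp only [Finset.mem_range] at hj; lia), zero_mul]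
  · intro k hk
    have hNk : -N ≤ k := by
      by_contra h
      simp [centralGaussBinom, h] at hk
    exact ⟨(k + N).toNat, by simp only [Int.toNat_of_nonneg (by lia : 0 ≤ k + N)]; ring⟩

/-- The two-sided theta series `θ(q, z) = ∑ q ^ (n ^ 2) z ^ n` over `n ∈ ℤ`. In Mathlib's notation
`jacobiTheta₂ w τ` is `θ(exp(πiτ), exp(2πiw))`; Ramanujan's functions are `φ(q) = θ(q, 1)` and
`2ψ(q ^ 2) = θ(q, q)`. -/
noncomputable def thetaSeries {𝕜 : Type*} [Field 𝕜] [TopologicalSpace 𝕜] (q z : 𝕜) : 𝕜 :=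
  ∑' n : ℤ, q ^ (n ^ 2) * z ^ n

variable {𝕜 : Type*} [NormedField 𝕜] {q z : 𝕜}

lemma qPoch_mul_qPoch_eq_tsum (hz : z ≠ 0) (N : ℕ) :
    qPoch (-(z * q)) (q ^ 2) N * qPoch (-(q / z)) (q ^ 2) N =
      ∑' k : ℤ, centralGaussBinom (q ^ 2) N k * (q ^ (k ^ 2) * z ^ k) := by
  have left : qPoch (-(z * q)) (q ^ 2) N = ∏ i ∈ Finset.range N, (1 + z * q ^ (2 * i + 1)) :=
    Finset.prod_congr rfl fun i _ ↦ by ring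
  have right : z ^ N * qPoch (-(q / z)) (q ^ 2) N =
      ∏ i ∈ Finset.range N, (z + q ^ (2 * i + 1)) := by
    have distribute : z ^ N * qPoch (-(q / z)) (q ^ 2) N =
        ∏ i ∈ Finset.range N, z * (1 - -(q / z) * (q ^ 2) ^ i) := by
      rw [Finset.prod_mul_distrib, Finset.prod_const, Finset.card_range, qPoch]
    rw [distribute]
    refine Finset.prod_congr rfl fun i _ ↦ ?_
    field_simp
    ring
  apply mul_left_cancel₀ (pow_ne_zero N hz)
  rw [left, mul_left_comm, right, prod_mul_prod_eq_sum_gaussBinom, ← two_mul,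
    tsum_centralGaussBinom_mul, Finset.mul_sum]
  refine Finset.sum_congr rfl fun j _ ↦ ?_
  rw [zpow_sub₀ hz, zpow_natCast, zpow_natCast, ← Int.natAbs_sq, ← Nat.cast_pow, zpow_natCast]
  field_simp

lemma summable_norm_pow_sq_mul_pow (z : 𝕜) (hq : ‖q‖ < 1) :
    Summable fun n : ℕ ↦ ‖q ^ n ^ 2 * z ^ n‖ := by
  have ratio (n : ℕ) : ‖q ^ (n + 1) ^ 2 * z ^ (n + 1)‖ =
      ‖q * z‖ * ‖q ^ 2‖ ^ n * ‖q ^ n ^ 2 * z ^ n‖ := by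
    rw [← norm_pow, ← norm_mul, ← norm_mul]
    congr 1
    ring
  have ratio_tendsto : Tendsto (fun n : ℕ ↦ ‖q * z‖ * ‖q ^ 2‖ ^ n) atTop (𝓝 0) := by
    simpa only [mul_zero] using (tendsto_pow_atTop_nhds_zero_of_lt_one (norm_nonneg _)
      (norm_pow_lt_one hq 2)).const_mul ‖q * z‖
  refine summable_of_ratio_norm_eventually_le one_half_lt_one ?_
  filter_upwards [ratio_tendsto.eventually_le_const one_half_pos] with n hn
  rw [norm_norm, norm_norm, ratio]
  gcongr

lemma summable_norm_thetaSeries (z : 𝕜) (hq : ‖q‖ < 1) :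
    Summable fun n : ℤ ↦ ‖q ^ (n ^ 2) * z ^ n‖ := by
  refine .of_nat_of_neg ?_ ?_
  · exact_mod_cast summable_norm_pow_sq_mul_pow z hq
  · simpa only [neg_sq, ← inv_zpow'] using
      mod_cast summable_norm_pow_sq_mul_pow z⁻¹ hq

variable [CompleteSpace 𝕜]

lemma exists_norm_gaussBinom_le (hq : ‖q‖ < 1) : ∃ C, ∀ n k, ‖gaussBinom q n k‖ ≤ C := by
  have lim := tendsto_qPoch q hq
  obtain ⟨A, hA⟩ := lim.norm.bddAbove_range
  obtain ⟨B, hB⟩ := (lim.inv₀ (qPochInf_ne_zero hq hq)).norm.bddAbove_range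
  have le_A (n : ℕ) : ‖qPoch q q n‖ ≤ A := hA ⟨n, rfl⟩
  have le_B (n : ℕ) : ‖(qPoch q q n)⁻¹‖ ≤ B := hB ⟨n, rfl⟩
  have A_nonneg : 0 ≤ A := (norm_nonneg _).trans (le_A 0)
  have B_nonneg : 0 ≤ B := (norm_nonneg _).trans (le_B 0)
  refine ⟨A * (B * B), fun n k ↦ ?_⟩
  rcases lt_or_ge n k with hnk | hkn
  · rw [gaussBinom_eq_zero_of_lt q hnk, norm_zero]
    positivity
  · obtain ⟨m, rfl⟩ := Nat.exists_eq_add_of_le' hkn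
    rw [gaussBinom_eq_div hq, div_eq_mul_inv, mul_inv, norm_mul, norm_mul]
    gcongr <;> first | exact le_A _ | exact le_B _

lemma exists_norm_centralGaussBinom_le (hq : ‖q‖ < 1) :
    ∃ C, ∀ N k, ‖centralGaussBinom q N k‖ ≤ C := by
  obtain ⟨C, hC⟩ := exists_norm_gaussBinom_le hq
  refine ⟨C, fun N k ↦ ?_⟩
  rw [centralGaussBinom]
  split_ifs
  · exact hC _ _
  · exact norm_zero.trans_le ((norm_nonneg _).trans (hC 0 0))

lemma tendsto_centralGaussBinom (hq : ‖q‖ < 1) (k : ℤ) :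
    Tendsto (centralGaussBinom q · k) atTop (𝓝 (qPochInf q q)⁻¹) := by
  have lim := tendsto_qPoch q hq
  have ne_zero := qPochInf_ne_zero hq hq
  have two_mul_atTop : Tendsto (2 * · : ℕ → ℕ) atTop atTop :=
    tendsto_id.const_mul_atTop' two_pos
  have shift_atTop (j : ℤ) : Tendsto (fun N : ℕ ↦ (j + N).toNat) atTop atTop :=
    tendsto_atTop.mpr fun b ↦ by
      filter_upwards [eventually_ge_atTop (b + j.natAbs)] with N hN
      lia
  have quotient := (lim.comp two_mul_atTop).div
    ((lim.comp (shift_atTop k)).mul (lim.comp (shift_atTop (-k)))) (mul_ne_zero ne_zero ne_zero)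
  rw [div_mul_cancel_left₀ ne_zero] at quotient
  refine quotient.congr' ?_
  filter_upwards [eventually_ge_atTop k.natAbs] with N hN
  have split : 2 * N = (-k + N).toNat + (k + N).toNat := by lia
  rw [centralGaussBinom, if_pos (by lia)]
  simp only [Function.comp_apply, Pi.div_apply]
  rw [split, gaussBinom_eq_div hq]

/-- The Jacobi triple product. -/
theorem thetaSeries_eq_qPochInf (hq : ‖q‖ < 1) (hz : z ≠ 0) :
    thetaSeries q z =
      qPochInf (q ^ 2) (q ^ 2) * (qPochInf (-(z * q)) (q ^ 2) * qPochInf (-(q / z)) (q ^ 2)) := by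
  have hq2 : ‖q ^ 2‖ < 1 := norm_pow_lt_one hq 2
  obtain ⟨C, hC⟩ := exists_norm_centralGaussBinom_le hq2
  have tannery : Tendsto
      (fun N ↦ ∑' k : ℤ, centralGaussBinom (q ^ 2) N k * (q ^ (k ^ 2) * z ^ k)) atTop
      (𝓝 (∑' k : ℤ, (qPochInf (q ^ 2) (q ^ 2))⁻¹ * (q ^ (k ^ 2) * z ^ k))) := by
    refine tendsto_tsum_of_dominated_convergence
      ((summable_norm_thetaSeries z hq).mul_left C)
      (fun k ↦ (tendsto_centralGaussBinom hq2 k).mul_const _) (.of_forall fun N k ↦ ?_)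
    rw [norm_mul]
    gcongr
    exact hC N k
  have limit_eq := tendsto_nhds_unique tannery (((tendsto_qPoch (-(z * q)) hq2).mul
    (tendsto_qPoch (-(q / z)) hq2)).congr (qPoch_mul_qPoch_eq_tsum hz))
  rwa [tsum_mul_left, inv_mul_eq_iff_eq_mul₀ (qPochInf_ne_zero hq2 hq2)] at limit_eq

end JacobiTripleProduct

section CubicDissection

variable {𝕜 : Type*} [NormedField 𝕜] {q z : 𝕜}

lemma mul_thetaSeries_sq_div (hq0 : q ≠ 0) (hz : z ≠ 0) :
    q * thetaSeries q (q ^ 2 / z) = z * thetaSeries q z := by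
  rw [thetaSeries, thetaSeries, ← (Equiv.subLeft (-1 : ℤ)).tsum_eq, ← tsum_mul_left,
    ← tsum_mul_left]
  refine tsum_congr fun n ↦ ?_
  rw [Equiv.subLeft_apply, div_zpow, ← zpow_natCast, ← zpow_mul, div_eq_mul_inv, ← zpow_neg]
  have hq1 : q * (q ^ (-1 - n) ^ 2 * q ^ ((2 : ℕ) * (-1 - n))) = q ^ n ^ 2 := by
    rw [← zpow_add₀ hq0, ← zpow_one_add₀ hq0]
    congr 1
    push_cast
    ring
  have hz1 : z ^ (-(-1 - n)) = z * z ^ n := by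
    rw [← zpow_one_add₀ hz]
    congr 1
    ring
  linear_combination z ^ (-(-1 - n)) * hq1 + q ^ n ^ 2 * hz1

variable [CompleteSpace 𝕜]

lemma thetaSeries_eq_sum_fin (hq : ‖q‖ < 1) (hq0 : q ≠ 0) (hz : z ≠ 0) (m : ℕ) [NeZero m] :
    thetaSeries q z = ∑ r : Fin m,
      q ^ (r : ℕ) ^ 2 * z ^ (r : ℕ) * thetaSeries (q ^ m ^ 2) (q ^ (2 * m * r) * z ^ m) := by
  let e : ℤ ≃ Fin m × ℤ := (Int.divModEquiv m).trans (Equiv.prodComm ℤ (Fin m))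
  have residue (r : Fin m) (n : ℤ) : q ^ (e.symm (r, n)) ^ 2 * z ^ e.symm (r, n) =
      q ^ (r : ℕ) ^ 2 * z ^ (r : ℕ) *
        ((q ^ m ^ 2) ^ n ^ 2 * (q ^ (2 * m * r) * z ^ m) ^ n) := by
    simp only [e, Equiv.symm_trans_apply, Equiv.prodComm_symm, Equiv.prodComm_apply,
      Prod.swap_prod_mk, Int.divModEquiv_symm_apply]
    have q_part : q ^ (n * m + r) ^ 2 =
        q ^ (r : ℕ) ^ 2 * (q ^ m ^ 2) ^ n ^ 2 * (q ^ (2 * m * r)) ^ n := by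
      simp only [← zpow_natCast, ← zpow_mul, ← zpow_add₀ hq0]
      congr 1
      push_cast
      ring
    have z_part : z ^ (n * m + r) = z ^ (r : ℕ) * (z ^ m) ^ n := by
      simp only [← zpow_natCast, ← zpow_mul, ← zpow_add₀ hz]
      congr 1
      ring
    rw [q_part, z_part, mul_zpow]
    ring
  have summable : Summable fun p ↦ q ^ (e.symm p) ^ 2 * z ^ e.symm p :=
    (e.symm.summable_iff (f := fun n ↦ q ^ n ^ 2 * z ^ n)).mpr
      (summable_norm_thetaSeries z hq).of_norm
  rw [thetaSeries, ← e.symm.tsum_eq, summable.tsum_prod, tsum_fintype]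
  simp only [residue, tsum_mul_left, thetaSeries]

lemma thetaSeries_neg_one_eq_sub (hq : ‖q‖ < 1) (hq0 : q ≠ 0) :
    thetaSeries q (-1) =
      thetaSeries (q ^ 9) (-1) - 2 * q * thetaSeries (q ^ 9) (-q ^ 6) := by
  have trisect : thetaSeries q (-1) = thetaSeries (q ^ 9) (-1) -
      q * thetaSeries (q ^ 9) (-q ^ 6) + q ^ 4 * thetaSeries (q ^ 9) (-q ^ 12) := by
    rw [thetaSeries_eq_sum_fin hq hq0 (neg_ne_zero.mpr one_ne_zero) 3, Fin.sum_univ_three]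
    norm_num
    ring
  have reflect : q ^ 3 * thetaSeries (q ^ 9) (-q ^ 12) = -thetaSeries (q ^ 9) (-q ^ 6) := by
    have quasi := mul_thetaSeries_sq_div (pow_ne_zero 9 hq0) (neg_ne_zero.mpr (pow_ne_zero 6 hq0))
    have quotient : (q ^ 9) ^ 2 / -q ^ 6 = -q ^ 12 := by field_simp
    rw [quotient] at quasi
    apply mul_left_cancel₀ (pow_ne_zero 6 hq0)
    linear_combination quasi
  linear_combination trisect + q * reflect

lemma thetaSeries_self_eq_add (hq : ‖q‖ < 1) (hq0 : q ≠ 0) :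
    thetaSeries q q =
      q ^ 2 * thetaSeries (q ^ 9) (q ^ 9) + 2 * thetaSeries (q ^ 9) (q ^ 3) := by
  have trisect : thetaSeries q q = thetaSeries (q ^ 9) (q ^ 3) +
      q ^ 2 * thetaSeries (q ^ 9) (q ^ 9) + q ^ 6 * thetaSeries (q ^ 9) (q ^ 15) := by
    rw [thetaSeries_eq_sum_fin hq hq0 hq0 3, Fin.sum_univ_three]
    norm_num [← pow_add, ← sq]
  have reflect : q ^ 6 * thetaSeries (q ^ 9) (q ^ 15) = thetaSeries (q ^ 9) (q ^ 3) := by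
    have quasi := mul_thetaSeries_sq_div (pow_ne_zero 9 hq0) (pow_ne_zero 3 hq0)
    have quotient : (q ^ 9) ^ 2 / q ^ 3 = q ^ 15 := by field_simp
    rw [quotient] at quasi
    apply mul_left_cancel₀ (pow_ne_zero 3 hq0)
    linear_combination quasi
  linear_combination trisect + reflect

lemma thetaSeries_neg_one_eq_qPochInf (hq : ‖q‖ < 1) :
    thetaSeries q (-1) = qPochInf (q ^ 2) (q ^ 2) * qPochInf q (q ^ 2) ^ 2 := by
  rw [thetaSeries_eq_qPochInf hq (neg_ne_zero.mpr one_ne_zero), div_neg, div_one, neg_mul,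
    one_mul, neg_neg, sq (qPochInf q _)]

lemma thetaSeries_self_eq_qPochInf (hq : ‖q‖ < 1) (hq0 : q ≠ 0) :
    thetaSeries q q = 2 * qPochInf (q ^ 2) (q ^ 2) * qPochInf (-q ^ 2) (q ^ 2) ^ 2 := by
  have peel : qPochInf (-1) (q ^ 2) = 2 * qPochInf (-q ^ 2) (q ^ 2) := by
    rw [qPochInf_eq_one_sub_mul _ (norm_pow_lt_one hq 2)]
    ring_nf
  rw [thetaSeries_eq_qPochInf hq hq0, div_self hq0, ← sq, peel]
  ring

lemma thetaSeries_self_sq_mul_thetaSeries_neg_one (hq : ‖q‖ < 1) (hq0 : q ≠ 0) :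
    thetaSeries q q ^ 2 * thetaSeries (q ^ 2) (-1) = 4 * qPochInf (q ^ 4) (q ^ 4) ^ 3 := by
  have hq2 : ‖q ^ 2‖ < 1 := norm_pow_lt_one hq 2
  have euler := qPochInf_neg_mul_qPochInf_sq hq2
  have double := qPochInf_mul_qPochInf_neg (q ^ 2) hq2
  rw [thetaSeries_self_eq_qPochInf hq hq0,
    thetaSeries_neg_one_eq_qPochInf hq2]
  simp only [← pow_mul, Nat.reduceMul] at euler double ⊢
  rw [← double]
  linear_combination 4 * (qPochInf (q ^ 2) (q ^ 2) * qPochInf (-q ^ 2) (q ^ 2)) ^ 3 *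
    (qPochInf (-q ^ 2) (q ^ 2) * qPochInf (q ^ 2) (q ^ 4) + 1) * euler

lemma two_mul_thetaSeries_mul_thetaSeries (hq : ‖q‖ < 1) (hq0 : q ≠ 0) :
    2 * thetaSeries (q ^ 3) q * thetaSeries (q ^ 6) (-q ^ 4) =
      thetaSeries (q ^ 3) (q ^ 3) * thetaSeries (q ^ 6) (-1) := by
  have hq3 : ‖q ^ 3‖ < 1 := norm_pow_lt_one hq 3
  have hq6 : ‖q ^ 6‖ < 1 := norm_pow_lt_one hq 6
  have theta₃ := thetaSeries_eq_qPochInf hq3 hq0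
  have theta₆ := thetaSeries_eq_qPochInf hq6 (neg_ne_zero.mpr (pow_ne_zero 4 hq0))
  have euler := qPochInf_neg_mul_qPochInf_sq hq6
  have euler_cube := qPochInf_neg_mul_qPochInf_cube (norm_pow_lt_one hq 2)
  have quotient₃ : q ^ 3 / q = q ^ 2 := by field_simp
  have quotient₆ : -(q ^ 6 / -q ^ 4) = q ^ 2 := by field_simp
  rw [quotient₃] at theta₃
  rw [quotient₆] at theta₆
  rw [theta₃, theta₆, thetaSeries_self_eq_qPochInf hq3 (pow_ne_zero 3 hq0),
    thetaSeries_neg_one_eq_qPochInf hq6]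
  simp only [← pow_mul, ← pow_succ', ← pow_add, neg_mul, neg_neg, Nat.reduceMul, Nat.reduceAdd]
    at euler euler_cube ⊢
  linear_combination 2 * qPochInf (q ^ 6) (q ^ 6) * qPochInf (q ^ 12) (q ^ 12) *
    (euler_cube - (qPochInf (-q ^ 6) (q ^ 6) * qPochInf (q ^ 6) (q ^ 12) + 1) * euler)

/-- Ramanujan's cubic continued fraction as a quotient of theta series in `t = q ^ (1 / 3)`, namely
`t θ(t ^ 9, -t ^ 6) / θ(t ^ 9, -1)`. -/
noncomputable def cubicTheta (t : 𝕜) : 𝕜 :=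
  t * thetaSeries (t ^ 9) (-t ^ 6) / thetaSeries (t ^ 9) (-1)

lemma thetaSeries_neg_one_ne_zero (hq : ‖q‖ < 1) : thetaSeries q (-1) ≠ 0 := by
  have hq2 : ‖q ^ 2‖ < 1 := norm_pow_lt_one hq 2
  rw [thetaSeries_neg_one_eq_qPochInf hq]
  exact mul_ne_zero (qPochInf_ne_zero hq2 hq2) (pow_ne_zero 2 (qPochInf_ne_zero hq hq2))

lemma thetaSeries_neg_one_eq_mul_cubicTheta (hq : ‖q‖ < 1) (hq0 : q ≠ 0) :
    thetaSeries q (-1) = thetaSeries (q ^ 9) (-1) * (1 - 2 * cubicTheta q) := by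
  have ne_zero := thetaSeries_neg_one_ne_zero (norm_pow_lt_one hq 9)
  rw [thetaSeries_neg_one_eq_sub hq hq0, cubicTheta]
  field_simp

lemma cubicTheta_sq_mul_thetaSeries_self (hq : ‖q‖ < 1) (hq0 : q ≠ 0) :
    cubicTheta (q ^ 2) * thetaSeries q q =
      q ^ 2 * thetaSeries (q ^ 9) (q ^ 9) * (1 + cubicTheta (q ^ 2)) := by
  have ne_zero := thetaSeries_neg_one_ne_zero (norm_pow_lt_one hq 18)
  have product := two_mul_thetaSeries_mul_thetaSeries (norm_pow_lt_one hq 3) (pow_ne_zero 3 hq0)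
  simp only [← pow_mul, Nat.reduceMul] at product
  have side_term : 2 * thetaSeries (q ^ 9) (q ^ 3) * cubicTheta (q ^ 2) =
      q ^ 2 * thetaSeries (q ^ 9) (q ^ 9) := by
    simp only [cubicTheta, ← pow_mul, Nat.reduceMul]
    field_simp
    linear_combination product
  linear_combination cubicTheta (q ^ 2) * thetaSeries_self_eq_add hq hq0 + side_term

theorem cubicTheta_sq_mul_qPochInf_cube (h2 : (2 : 𝕜) ≠ 0) (hq : ‖q‖ < 1) (hq0 : q ≠ 0) :
    cubicTheta (q ^ 2) ^ 2 * qPochInf (q ^ 4) (q ^ 4) ^ 3 =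
      q ^ 4 * qPochInf (q ^ 36) (q ^ 36) ^ 3 *
        ((1 + cubicTheta (q ^ 2)) ^ 2 * (1 - 2 * cubicTheta (q ^ 2))) := by
  have phi := thetaSeries_neg_one_eq_mul_cubicTheta (norm_pow_lt_one hq 2) (pow_ne_zero 2 hq0)
  have psi := cubicTheta_sq_mul_thetaSeries_self hq hq0
  have cube := thetaSeries_self_sq_mul_thetaSeries_neg_one hq hq0
  have cube₉ := thetaSeries_self_sq_mul_thetaSeries_neg_one (norm_pow_lt_one hq 9)
    (pow_ne_zero 9 hq0)
  simp only [← pow_mul, Nat.reduceMul] at phi cube₉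
  apply mul_left_cancel₀ (pow_ne_zero 2 h2)
  generalize cubicTheta (q ^ 2) = w at *
  calc 2 ^ 2 * (w ^ 2 * qPochInf (q ^ 4) (q ^ 4) ^ 3)
      = (w * thetaSeries q q) ^ 2 * thetaSeries (q ^ 2) (-1) := by
        linear_combination -w ^ 2 * cube
    _ = q ^ 4 * (thetaSeries (q ^ 9) (q ^ 9) ^ 2 * thetaSeries (q ^ 18) (-1)) *
          ((1 + w) ^ 2 * (1 - 2 * w)) := by
        rw [psi, phi]
        ring
    _ = _ := by
        rw [cube₉]
        ring

end CubicDissection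

section CubicContinuedFraction

variable {τ : ℂ}

lemma norm_nome_lt_one (hτ : 0 < τ.im) : ‖nome τ‖ < 1 := by
  simpa [nome] using UpperHalfPlane.norm_exp_two_pi_I_lt_one ⟨τ, hτ⟩

lemma nome_ne_zero (τ : ℂ) : nome τ ≠ 0 := Complex.exp_ne_zero _

lemma nome_nat_mul (n : ℕ) (τ : ℂ) : nome (n * τ) = nome τ ^ n := by
  rw [nome, nome, ← Complex.exp_nat_mul]
  ring_nf

lemma dedekindEta_eq_qPochInf (τ : ℂ) :
    dedekindEta τ = Complex.exp (Real.pi * I * τ / 12) * qPochInf (nome τ) (nome τ) := by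
  rw [dedekindEta, qPochInf]
  congr 2 with n
  rw [← pow_succ', ← nome_nat_mul, nome]
  push_cast
  ring_nf

lemma beta_three_mul (τ : ℂ) :
    beta (3 * τ) = 3 + qPochInf (nome τ) (nome τ) ^ 3 /
      (nome τ * qPochInf (nome τ ^ 9) (nome τ ^ 9) ^ 3) := by
  have exponents : Complex.exp (Real.pi * I * (3 * (3 * τ)) / 12) ^ 3 =
      Complex.exp (Real.pi * I * τ / 12) ^ 3 * nome τ := by
    rw [nome, ← Complex.exp_nat_mul, ← Complex.exp_nat_mul, ← Complex.exp_add]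
    push_cast
    ring_nf
  have nine : nome (3 * (3 * τ)) = nome τ ^ 9 := by
    rw [← nome_nat_mul]
    push_cast
    ring_nf
  rw [beta, mul_div_cancel_left₀ τ three_ne_zero, dedekindEta_eq_qPochInf, dedekindEta_eq_qPochInf,
    nine, mul_pow, mul_pow, exponents, mul_assoc (_ ^ 3),
    mul_div_mul_left _ _ (pow_ne_zero 3 (Complex.exp_ne_zero _))]

lemma c_eq_qPochInf (hτ : 0 < τ.im) :
    c τ = nome (τ / 3) *
      (qPochInf (nome τ ^ 5) (nome τ ^ 6) * qPochInf (nome τ) (nome τ ^ 6) /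
        qPochInf (nome τ ^ 3) (nome τ ^ 6) ^ 2) := by
  have hq := norm_nome_lt_one hτ
  have hq6 : ‖nome τ ^ 6‖ < 1 := norm_pow_lt_one hq 6
  have multipliable (x : ℂ) := multipliable_one_sub_mul_pow x hq6
  have square : qPochInf (nome τ ^ 3) (nome τ ^ 6) ^ 2 =
      ∏' n : ℕ, (1 - nome τ ^ 3 * (nome τ ^ 6) ^ n) ^ 2 := ((multipliable _).tprod_pow 2).symm
  have square_ne_zero := pow_ne_zero 2 (qPochInf_ne_zero (norm_pow_lt_one hq 3) hq6)
  rw [square] at square_ne_zero ⊢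
  rw [c, qPochInf, qPochInf, ← (multipliable _).tprod_mul (multipliable _),
    ← ((multipliable _).mul (multipliable _)).tprod_div₀ ((multipliable _).pow 2) square_ne_zero]
  congr 1
  · rw [nome, mul_div_assoc]
  · congr 1 with n
    have factor (j k : ℕ) (h : k + j = 6) :
        nome τ ^ (6 * (n + 1) - j) = nome τ ^ k * (nome τ ^ 6) ^ n := by
      rw [← pow_mul, ← pow_add]
      congr 1
      lia
    rw [factor 1 5 rfl, factor 5 1 rfl, factor 3 3 rfl, pow_one]

lemma c_three_mul (hτ : 0 < τ.im) : c (3 * τ) = cubicTheta (nome τ) := by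
  have hq := norm_nome_lt_one hτ
  have hq9 : ‖nome τ ^ 9‖ < 1 := norm_pow_lt_one hq 9
  have hq18 : ‖nome τ ^ 18‖ < 1 := norm_pow_lt_one hq 18
  have cube : nome (3 * τ) = nome τ ^ 3 := mod_cast nome_nat_mul 3 τ
  have quotient : -(nome τ ^ 9 / -nome τ ^ 6) = nome τ ^ 3 := by
    have := nome_ne_zero τ
    field_simp
  have num_eq := thetaSeries_eq_qPochInf hq9 (neg_ne_zero.mpr (pow_ne_zero 6 (nome_ne_zero τ)))
  have den_eq := thetaSeries_neg_one_eq_qPochInf hq9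
  rw [quotient] at num_eq
  simp only [neg_mul, neg_neg, ← pow_add, ← pow_mul, Nat.reduceMul, Nat.reduceAdd]
    at num_eq den_eq
  rw [c_eq_qPochInf (by simpa using hτ), mul_div_cancel_left₀ τ three_ne_zero, cube, cubicTheta,
    num_eq, den_eq]
  simp only [← pow_mul, Nat.reduceMul]
  rw [mul_div_assoc (nome τ), mul_div_mul_left _ _ (qPochInf_ne_zero hq18 hq18)]

end CubicContinuedFraction

/-- For `τ` in the upper half-plane, `β(2τ)c(τ)² = 1 − 2c(τ)³`. -/
theorem beta_two_tau_cubicCF (τ : ℂ) (hτ : 0 < τ.im) :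
    beta (2 * τ) * c τ ^ 2 = 1 - 2 * c τ ^ 3 := by
  obtain ⟨σ, rfl⟩ : ∃ σ, τ = 3 * (2 * σ) := ⟨τ / 6, by ring⟩
  have hσ : 0 < σ.im := by simpa using hτ
  have hq := norm_nome_lt_one hσ
  have hq36 : ‖nome σ ^ 36‖ < 1 := norm_pow_lt_one hq 36
  have nome_two : nome (2 * σ) = nome σ ^ 2 := mod_cast nome_nat_mul 2 σ
  have nome_four : nome (4 * σ) = nome σ ^ 4 := mod_cast nome_nat_mul 4 σ
  have key := cubicTheta_sq_mul_qPochInf_cube two_ne_zero hq (nome_ne_zero σ)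
  rw [c_three_mul (by simpa using hσ), nome_two, show 2 * (3 * (2 * σ)) = 3 * (4 * σ) by ring,
    beta_three_mul, nome_four, ← pow_mul, add_mul, div_mul_eq_mul_div, mul_comm (_ ^ 3), key,
    mul_div_cancel_left₀ _ (mul_ne_zero (pow_ne_zero 4 (nome_ne_zero σ))
      (pow_ne_zero 3 (qPochInf_ne_zero hq36 hq36)))]
  ring
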